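/- Let λ ≠ 0 and let ⟨·,·⟩ be the symmetric bilinear form on T*𝔥₃ with matrix diag(λ, λ, −λ, 1, 1, −1) in the basis (e₁,…,e₆). Then there exists a Lie algebra derivation D of T*𝔥₃ such that Ric = (5/(2λ²))·id + D; that is, this metric is a shrinking algebraic Ricci soliton. -/

import Mathlib

open Matrix

noncomputable section

/-- The Lie bracket of `T*𝔥₃` in the basis `(e₁,…,e₆)`:
`[e₁,e₂]=e₆`, `[e₁,e₃]=−e₅`, `[e₂,e₃]=e₄`. -/
def bra (x y : Fin 6 → ℝ) : Fin 6 → ℝ :=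
  ![0, 0, 0, x 1 * y 2 - x 2 * y 1, x 2 * y 0 - x 0 * y 2, x 0 * y 1 - x 1 * y 0]

/-- The bilinear form associated to the matrix `A`. -/
def gm (A : Matrix (Fin 6) (Fin 6) ℝ) (x y : Fin 6 → ℝ) : ℝ := x ⬝ᵥ A.mulVec y

/-- Curvature `R(x,y)z = ∇ₓ∇_y z − ∇_y∇ₓ z − ∇_{[x,y]} z` of a connection `D`. -/
def curv (D : (Fin 6 → ℝ) → (Fin 6 → ℝ) → (Fin 6 → ℝ)) (x y z : Fin 6 → ℝ) :
    Fin 6 → ℝ :=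
  D x (D y z) - D y (D x z) - D (bra x y) z

/-- Ricci tensor `ρ(x,y) = tr(z ↦ R(z,x)y)`, computed in the standard basis. -/
def ricci (D : (Fin 6 → ℝ) → (Fin 6 → ℝ) → (Fin 6 → ℝ)) (x y : Fin 6 → ℝ) : ℝ :=
  ∑ i : Fin 6, curv D (Pi.single i 1) x y i

/-- `Der` is (the matrix of) a derivation of `T*𝔥₃`. -/
def IsDerivation (Der : Matrix (Fin 6) (Fin 6) ℝ) : Prop :=
  ∀ x y : Fin 6 → ℝ,
    Der.mulVec (bra x y) = bra (Der.mulVec x) y + bra x (Der.mulVec y)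

/-!
The bracket of `T*𝔥₃ = ℝ³ ⊕ ℝ³` is the cross product of the first components. By the Koszul
formula the Levi-Civita connection is `∇ₓy = ½([x,y] − (ad x)ᵀy − (ad y)ᵀx)`. For a diagonal
metric the Ricci operator is then diagonal, and linear in the three ratios
`wₖ = ⟨[eᵢ,eⱼ],[eᵢ,eⱼ]⟩ / (⟨eᵢ,eᵢ⟩⟨eⱼ,eⱼ⟩)`. When these have a common value `w`, the Ricci
eigenvalues are `−w` on the first `ℝ³` and `w/2` on the second. A derivation acting by a scalar on
each summand acts on the second by twice the scalar of the first, so `w/2 − γ = 2(−w − γ)`, which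
gives `γ = −5w/2`.
-/

/-- The Koszul formula `2⟨∇ₓy, z⟩ = ⟨[x,y],z⟩ − ⟨[y,z],x⟩ + ⟨[z,x],y⟩` for the form with Gram
matrix `S`, characterising `D` as the Levi-Civita connection when `S` is nondegenerate. -/
def IsLeviCivita (S : Matrix (Fin 6) (Fin 6) ℝ)
    (D : (Fin 6 → ℝ) → (Fin 6 → ℝ) → (Fin 6 → ℝ)) : Prop :=
  ∀ x y z, 2 * gm S (D x y) z = gm S (bra x y) z - gm S (bra y z) x + gm S (bra z x) y

/-- `adTranspose d x` is the transpose of `ad x` with respect to the nondegenerate form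
`diagonal d`, read off from the cyclic symmetry of the triple product. -/
def adTranspose (d x y : Fin 6 → ℝ) : Fin 6 → ℝ :=
  ![(d 4 * y 4 * x 2 - d 5 * y 5 * x 1) / d 0,
    (d 5 * y 5 * x 0 - d 3 * y 3 * x 2) / d 1,
    (d 3 * y 3 * x 1 - d 4 * y 4 * x 0) / d 2, 0, 0, 0]

/-- The Levi-Civita connection of the nondegenerate metric `diagonal d`. -/
def diagConnection (d x y : Fin 6 → ℝ) : Fin 6 → ℝ :=
  (1 / 2 : ℝ) • (bra x y - adTranspose d x y - adTranspose d y x)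

/-- The three ratios `⟨[eᵢ,eⱼ],[eᵢ,eⱼ]⟩ / (⟨eᵢ,eᵢ⟩⟨eⱼ,eⱼ⟩)` of the metric `diagonal d`, indexed by
the element of `{e₁, e₂, e₃}` which is left out. -/
def bracketRatio (d : Fin 6 → ℝ) : Fin 3 → ℝ :=
  ![d 3 / (d 1 * d 2), d 4 / (d 2 * d 0), d 5 / (d 0 * d 1)]

/-- The eigenvalues of the Ricci operator of a diagonal metric whose bracket ratios are `w`. -/
def ricciEigenvalues (w : Fin 3 → ℝ) : Fin 6 → ℝ :=
  ![-(w 1 + w 2) / 2, -(w 2 + w 0) / 2, -(w 0 + w 1) / 2, w 0 / 2, w 1 / 2, w 2 / 2]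

lemma nondegenerate_diagonal {n R : Type*} [Finite n] [DecidableEq n] [CommRing R] [IsDomain R]
    {d : n → R} (hd : ∀ i, d i ≠ 0) : (diagonal d).Nondegenerate := by
  have := Fintype.ofFinite n
  refine nondegenerate_of_det_ne_zero ?_
  rw [det_diagonal]
  exact Finset.prod_ne_zero_iff.mpr fun i _ => hd i

section Connection

variable {S : Matrix (Fin 6) (Fin 6) ℝ}

lemma gm_comm (hS : S.IsSymm) (x y : Fin 6 → ℝ) : gm S x y = gm S y x := by
  rw [gm, gm, dotProduct_mulVec, ← mulVec_transpose, hS.eq, dotProduct_comm]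

lemma gm_diagonal (d x y : Fin 6 → ℝ) : gm (diagonal d) x y = ∑ i, x i * (d i * y i) := by
  simp only [gm, dotProduct, mulVec_diagonal]

lemma bra_skew (x y : Fin 6 → ℝ) : -bra y x = bra x y := by
  simp only [bra, neg_cons, neg_zero, neg_sub, neg_empty, mul_comm]

lemma IsLeviCivita.unique (hS : S.Nondegenerate)
    {D D' : (Fin 6 → ℝ) → (Fin 6 → ℝ) → (Fin 6 → ℝ)}
    (hD : IsLeviCivita S D) (hD' : IsLeviCivita S D') : D = D' := by
  funext x y
  refine sub_eq_zero.mp (hS.eq_zero_of_ortho fun z => ?_)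
  have hz : gm S (D x y) z = gm S (D' x y) z :=
    mul_left_cancel₀ two_ne_zero ((hD x y z).trans (hD' x y z).symm)
  rw [sub_dotProduct]
  exact sub_eq_zero.mpr hz

lemma isLeviCivita_of_adjoint (hS : S.IsSymm)
    {adT : (Fin 6 → ℝ) → (Fin 6 → ℝ) → (Fin 6 → ℝ)}
    (hadT : ∀ x y z, gm S (adT x y) z = gm S y (bra x z)) :
    IsLeviCivita S fun x y => (1 / 2 : ℝ) • (bra x y - adT x y - adT y x) := by
  intro x y z
  have hzx : gm S (bra z x) y = -gm S y (bra x z) := by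
    rw [← bra_skew z x, gm_comm hS, gm, mulVec_neg, dotProduct_neg, gm]
  calc 2 * gm S ((1 / 2 : ℝ) • (bra x y - adT x y - adT y x)) z
      = gm S (bra x y) z - gm S (adT x y) z - gm S (adT y x) z := by
        simp only [gm, smul_dotProduct, sub_dotProduct, smul_eq_mul]
        ring
    _ = gm S (bra x y) z - gm S (bra y z) x + gm S (bra z x) y := by
        rw [hadT, hadT, hzx, gm_comm hS x]
        ring

end Connection

section Diagonal

variable {d : Fin 6 → ℝ}

lemma gm_adTranspose (hd : ∀ i, d i ≠ 0) (x y z : Fin 6 → ℝ) :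
    gm (diagonal d) (adTranspose d x y) z = gm (diagonal d) y (bra x z) := by
  have h0 := hd 0
  have h1 := hd 1
  have h2 := hd 2
  simp only [gm_diagonal, adTranspose, bra, Fin.sum_univ_six, cons_val]
  field_simp
  ring

lemma isLeviCivita_diagConnection (hd : ∀ i, d i ≠ 0) :
    IsLeviCivita (diagonal d) (diagConnection d) :=
  isLeviCivita_of_adjoint (isSymm_diagonal d) (gm_adTranspose hd)

lemma curv_diagConnection_single_apply (d x y : Fin 6 → ℝ) :
    (fun i => curv (diagConnection d) (Pi.single i 1) x y i) =
      ![(d 4 ^ 2 / d 2 * x 4 * y 4 + d 5 ^ 2 / d 1 * x 5 * y 5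
          - 3 * (d 5 * x 1 * y 1 + d 4 * x 2 * y 2)) / (4 * d 0),
        (d 5 ^ 2 / d 0 * x 5 * y 5 + d 3 ^ 2 / d 2 * x 3 * y 3
          - 3 * (d 3 * x 2 * y 2 + d 5 * x 0 * y 0)) / (4 * d 1),
        (d 3 ^ 2 / d 1 * x 3 * y 3 + d 4 ^ 2 / d 0 * x 4 * y 4
          - 3 * (d 4 * x 0 * y 0 + d 3 * x 1 * y 1)) / (4 * d 2),
        d 3 / 4 * (x 1 * y 1 / d 2 + x 2 * y 2 / d 1),
        d 4 / 4 * (x 2 * y 2 / d 0 + x 0 * y 0 / d 2),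
        d 5 / 4 * (x 0 * y 0 / d 1 + x 1 * y 1 / d 0)] := by
  funext i
  fin_cases i <;>
    simp only [curv, diagConnection, adTranspose, bra, Pi.sub_apply, Pi.smul_apply, smul_eq_mul,
      Pi.single_apply, Fin.zero_eta, Fin.mk_one, Fin.reduceFinMk, Fin.reduceEq, cons_val,
      if_true, if_false] <;>
    ring

lemma ricci_diagConnection (hd : ∀ i, d i ≠ 0) (x y : Fin 6 → ℝ) :
    ricci (diagConnection d) x y =
      gm (diagonal d) (diagonal (ricciEigenvalues (bracketRatio d)) *ᵥ x) y := by
  have h0 := hd 0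
  have h1 := hd 1
  have h2 := hd 2
  rw [ricci, curv_diagConnection_single_apply]
  simp only [gm_diagonal, mulVec_diagonal, ricciEigenvalues, bracketRatio, Fin.sum_univ_six,
    cons_val]
  field_simp
  ring

theorem IsLeviCivita.ricci_eq (hd : ∀ i, d i ≠ 0)
    {D : (Fin 6 → ℝ) → (Fin 6 → ℝ) → (Fin 6 → ℝ)} (hD : IsLeviCivita (diagonal d) D)
    (x y : Fin 6 → ℝ) :
    ricci D x y = gm (diagonal d) (diagonal (ricciEigenvalues (bracketRatio d)) *ᵥ x) y := by
  rw [hD.unique (nondegenerate_diagonal hd) (isLeviCivita_diagConnection hd),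
    ricci_diagConnection hd]

end Diagonal

lemma isDerivation_diagonal {p : Fin 6 → ℝ} (h3 : p 3 = p 1 + p 2) (h4 : p 4 = p 2 + p 0)
    (h5 : p 5 = p 0 + p 1) : IsDerivation (diagonal p) := by
  intro x y
  funext i
  fin_cases i <;>
    simp only [bra, mulVec_diagonal, h3, h4, h5, Pi.add_apply, Fin.zero_eta, Fin.mk_one,
      Fin.reduceFinMk, cons_val] <;>
    ring

lemma diagonal_ricciEigenvalues_const (w : ℝ) :
    diagonal (ricciEigenvalues fun _ => w) =
      (-5 * w / 2) • (1 : Matrix (Fin 6) (Fin 6) ℝ) +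
        diagonal ![3 * w / 2, 3 * w / 2, 3 * w / 2, 3 * w, 3 * w, 3 * w] := by
  rw [smul_one_eq_diagonal, diagonal_add, diagonal_eq_diagonal_iff]
  intro i
  fin_cases i <;>
    simp only [ricciEigenvalues, Fin.zero_eta, Fin.mk_one, Fin.reduceFinMk, cons_val] <;>
    ring

theorem stmt_16_general {d : Fin 6 → ℝ} (hd : ∀ i, d i ≠ 0) {w : ℝ}
    (hw : bracketRatio d = fun _ => w)
    {D : (Fin 6 → ℝ) → (Fin 6 → ℝ) → (Fin 6 → ℝ)} (hD : IsLeviCivita (diagonal d) D) :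
    ∃ Der Ric : Matrix (Fin 6) (Fin 6) ℝ,
      (∀ x y, gm (diagonal d) (Ric *ᵥ x) y = ricci D x y) ∧ IsDerivation Der ∧
      Ric = (-5 * w / 2) • (1 : Matrix (Fin 6) (Fin 6) ℝ) + Der := by
  refine ⟨diagonal ![3 * w / 2, 3 * w / 2, 3 * w / 2, 3 * w, 3 * w, 3 * w],
    diagonal (ricciEigenvalues (bracketRatio d)), fun x y => (hD.ricci_eq hd x y).symm,
    isDerivation_diagonal ?_ ?_ ?_, hw ▸ diagonal_ricciEigenvalues_const w⟩
  all_goals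
    simp only [cons_val]
    ring

lemma bracketRatio_self_self_neg_self {a : ℝ} (ha : a ≠ 0) :
    bracketRatio ![a, a, -a, 1, 1, -1] = fun _ => -1 / a ^ 2 := by
  funext i
  fin_cases i <;>
    simp only [bracketRatio, Fin.zero_eta, Fin.mk_one, Fin.reduceFinMk, cons_val] <;>
    field_simp

/-- The metric `diag(λ,λ,−λ,1,1,−1)` on `T*𝔥₃` is a shrinking algebraic Ricci soliton:
`Ric = (5/(2λ²))·id + D` for some derivation `D`. -/
theorem stmt_16 (lam : ℝ) (hlam : lam ≠ 0)
    (Smat : Matrix (Fin 6) (Fin 6) ℝ)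
    (hSmat : Smat = Matrix.diagonal ![lam, lam, -lam, 1, 1, -1])
    (D : (Fin 6 → ℝ) → (Fin 6 → ℝ) → (Fin 6 → ℝ))
    (hkoszul : ∀ x y z, 2 * gm Smat (D x y) z =
      gm Smat (bra x y) z - gm Smat (bra y z) x + gm Smat (bra z x) y) :
    ∃ Der Ric : Matrix (Fin 6) (Fin 6) ℝ,
      (∀ x y, gm Smat (Ric.mulVec x) y = ricci D x y) ∧ IsDerivation Der ∧
      Ric = (5 / (2 * lam ^ 2)) • (1 : Matrix (Fin 6) (Fin 6) ℝ) + Der := by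
  subst hSmat
  have hd : ∀ i, ![lam, lam, -lam, 1, 1, -1] i ≠ 0 := by simp [Fin.forall_fin_succ, hlam]
  have hγ : 5 / (2 * lam ^ 2) = -5 * (-1 / lam ^ 2) / 2 := by ring
  rw [hγ]
  exact stmt_16_general hd (bracketRatio_self_self_neg_self hlam) hkoszul
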